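/- Let (e_1, ..., e_k) and (c_1, ..., c_ℓ) be two systems of pairwise orthogonal nonzero tripotents in a Jordan pair with positive Hermitian involution, and let ν_1 < ν_2 < ... < ν_k and μ_1 < ... < μ_ℓ be nonzero real numbers. Then Σ_{i=1}^k ν_i D_{e_i, ē_i} = Σ_{j=1}^ℓ μ_j D_{c_j, c̄_j} as operators on V if and only if k = ℓ, ν_i = μ_i for all i, and e_i and c_i induce the same Peirce decompositions (V_m(e_i) = V_m(c_i) for m = 0, 1, 2) for all i. -/

import Mathlib

open scoped BigOperators

/-- A (complex) Jordan pair, presented by its quadratic operators `Q, Q'` and the associated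
trilinear products `D x y z = {x y z}`, `D' y x w = {y x w}`. -/
structure JordanPairData (V V' : Type*) [AddCommGroup V] [Module ℂ V]
    [AddCommGroup V'] [Module ℂ V'] where
  Q : V → V' →ₗ[ℂ] V
  Q' : V' → V →ₗ[ℂ] V'
  D : V →ₗ[ℂ] V' →ₗ[ℂ] V →ₗ[ℂ] V
  D' : V' →ₗ[ℂ] V →ₗ[ℂ] V' →ₗ[ℂ] V'
  D_eq : ∀ x y z, D x y z = Q (x + z) y - Q x y - Q z y
  D'_eq : ∀ y x w, D' y x w = Q' (y + w) x - Q' y x - Q' w x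
  Q_smul : ∀ (c : ℂ) x y, Q (c • x) y = (c * c) • Q x y
  Q'_smul : ∀ (c : ℂ) y x, Q' (c • y) x = (c * c) • Q' y x

namespace JordanPairData

variable {V V' : Type*} [AddCommGroup V] [Module ℂ V] [AddCommGroup V'] [Module ℂ V']
variable (J : JordanPairData V V')

/-- `(e, e')` is an idempotent: `Q_e e' = e` and `Q_{e'} e = e'`. -/
def IsIdem (e : V) (e' : V') : Prop := J.Q e e' = e ∧ J.Q' e' e = e'

/-- the Bergman operator `B(x,y) = Id - D_{x,y} + Q_x Q_y` on `V`. -/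
def B (x : V) (y : V') : V →ₗ[ℂ] V := LinearMap.id - J.D x y + (J.Q x) ∘ₗ (J.Q' y)

/-- the Bergman operator on `V'`. -/
def B' (y : V') (x : V) : V' →ₗ[ℂ] V' := LinearMap.id - J.D' y x + (J.Q' y) ∘ₗ (J.Q x)

open scoped Classical in
/-- the quasi-inverse `x^y = B(x,y)⁻¹ (x - Q_x y)` (junk value if `(x,y)` is not
quasi-invertible). -/
noncomputable def qi (x : V) (y : V') : V :=
  if h : Function.Bijective (J.B x y) then (LinearEquiv.ofBijective _ h).symm (x - J.Q x y) else 0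

open scoped Classical in
/-- the quasi-inverse `y^x` on the `V'` side. -/
noncomputable def qi' (y : V') (x : V) : V' :=
  if h : Function.Bijective (J.B' y x) then (LinearEquiv.ofBijective _ h).symm (y - J.Q' y x) else 0

/-- the principal inner ideal `[x] = Q_x V'`. -/
def pii (x : V) : Submodule ℂ V := LinearMap.range (J.Q x)

/-- the rank of an element: the maximal length of chains `[x₀] ⊊ … ⊊ [x_k]` of principal inner
ideals with `x_i ∈ [x]`. -/
noncomputable def elemRank (x : V) : ℕ :=
  sSup {k : ℕ | ∃ c : Fin (k + 1) → V, (∀ i, c i ∈ J.pii x) ∧ StrictMono fun i => J.pii (c i)}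

end JordanPairData

/-- the Peirce `m`-space of `e` (with respect to the involution `bar`):
the eigenspace of `D_{e, ē}` with eigenvalue `m`. -/
noncomputable def peirceSpace {V V' : Type*} [AddCommGroup V] [Module ℂ V]
    [AddCommGroup V'] [Module ℂ V'] (J : JordanPairData V V') (bar : V → V')
    (e : V) (m : ℂ) : Submodule ℂ V :=
  Module.End.eigenspace (J.D e (bar e) : Module.End ℂ V) m

/-- the joint Peirce space `V_{ij}` (indices in `Fin (k+1)`, `0` meaning the extra index `0`)
for a system of orthogonal tripotents `e : Fin k → V`. -/
noncomputable def jointPeirceSpace {V V' : Type*} [AddCommGroup V] [Module ℂ V]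
    [AddCommGroup V'] [Module ℂ V'] (J : JordanPairData V V') (bar : V → V')
    {k : ℕ} (e : Fin k → V) (i j : Fin (k + 1)) : Submodule ℂ V :=
  ⨅ ℓ : Fin k, Module.End.eigenspace (J.D (e ℓ) (bar (e ℓ)) : Module.End ℂ V)
    (((if Fin.succ ℓ = i then 1 else 0) + (if Fin.succ ℓ = j then 1 else 0) : ℂ))

open Module.End in
/-- A finite family of operators whose joint eigenspaces with natural weights of total size at most
two span the space, and each of which has `2` as an eigenvalue. -/
structure IsPeirceFamily {V ι : Type*} [AddCommGroup V] [Module ℂ V] [Fintype ι]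
    (A : ι → Module.End ℂ V) : Prop where
  iSup_eq_top : (⨆ w : {w : ι → ℕ // ∑ i, w i ≤ 2}, ⨅ i, eigenspace (A i) (w.1 i : ℂ)) = ⊤
  eigenspace_two_ne_bot : ∀ i, eigenspace (A i) 2 ≠ ⊥

section PeirceFamily

open Module.End

variable {V ι κ P : Type*} [AddCommGroup V] [Module ℂ V] [Fintype ι] [Fintype κ]

/-- If subspaces of eigenspaces of `f` span the space, each eigenspace is spanned by those of the
subspaces which it is known to contain. -/
theorem eigenspace_eq_iSup_of_iSup_eq_top (f : Module.End ℂ V) (W : P → Submodule ℂ V) (φ : P → ℂ)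
    (hW : ∀ p, W p ≤ eigenspace f (φ p)) (htop : ⨆ p, W p = ⊤) (a : ℂ) :
    eigenspace f a = ⨆ (p) (_ : φ p = a), W p := by
  set X := ⨆ (p) (_ : φ p = a), W p
  set Y := ⨆ (p) (_ : φ p ≠ a), W p
  have hXa : X ≤ eigenspace f a := iSup₂_le fun p hp => hp ▸ hW p
  have hYa : Y ≤ ⨆ (b) (_ : b ≠ a), eigenspace f b :=
    iSup₂_le fun p hp => (hW p).trans (le_iSup₂_of_le (φ p) hp le_rfl)
  have hdisj : Y ⊓ eigenspace f a = ⊥ :=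
    ((eigenspaces_iSupIndep f a).mono_right hYa).symm.eq_bot
  have hXY : X ⊔ Y = ⊤ := by
    refine top_le_iff.mp (htop ▸ iSup_le fun p => ?_)
    by_cases hp : φ p = a
    · exact (le_iSup₂ (f := fun p (_ : φ p = a) => W p) p hp).trans le_sup_left
    · exact (le_iSup₂ (f := fun p (_ : φ p ≠ a) => W p) p hp).trans le_sup_right
  calc eigenspace f a = (X ⊔ Y) ⊓ eigenspace f a := by rw [hXY, top_inf_eq]
    _ = X ⊔ Y ⊓ eigenspace f a := (sup_inf_assoc_of_le Y hXa)
    _ = X := by rw [hdisj, sup_bot_eq]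

/-- A weight of total size at most two attaining an extreme value `2 x` is concentrated on indices
where `ν` takes the value `x`. -/
theorem eq_of_sum_mul_eq_two_mul {s : Finset ι} {ν : ι → ℝ} {x : ℝ} {w : ι → ℕ}
    (hx : x ≠ 0) (hle : ∀ i ∈ s, |ν i| ≤ |x|) (hw : ∑ i, w i ≤ 2)
    (h : ∑ i ∈ s, ν i * w i = 2 * x) :
    (∀ i ∈ s, w i ≠ 0 → ν i = x) ∧ ∑ i ∈ s, w i = 2 := by
  have hws : ∑ i ∈ s, w i ≤ 2 :=
    (Finset.sum_le_sum_of_subset (Finset.subset_univ s)).trans hw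
  have hnn : ∀ i ∈ s, 0 ≤ (w i : ℝ) * (x ^ 2 - ν i * x) := fun i hi => by
    refine mul_nonneg (Nat.cast_nonneg _) (sub_nonneg.mpr ?_)
    calc ν i * x ≤ |ν i| * |x| := by rw [← abs_mul]; exact le_abs_self _
      _ ≤ |x| * |x| := mul_le_mul_of_nonneg_right (hle i hi) (abs_nonneg x)
      _ = x ^ 2 := by rw [← sq, sq_abs]
  have hsum : ∑ i ∈ s, (w i : ℝ) * (x ^ 2 - ν i * x) = x ^ 2 * (((∑ i ∈ s, w i : ℕ) : ℝ) - 2) := by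
    have : ∑ i ∈ s, (w i : ℝ) * (x ^ 2 - ν i * x)
        = x ^ 2 * ∑ i ∈ s, (w i : ℝ) - x * ∑ i ∈ s, ν i * w i := by
      rw [Finset.mul_sum, Finset.mul_sum, ← Finset.sum_sub_distrib]
      exact Finset.sum_congr rfl fun i _ => by ring
    rw [this, h]
    push_cast
    ring
  have hx2 : 0 < x ^ 2 := by positivity
  have hws' : ((∑ i ∈ s, w i : ℕ) : ℝ) ≤ 2 := by exact_mod_cast hws
  have h0 : ∑ i ∈ s, (w i : ℝ) * (x ^ 2 - ν i * x) = 0 :=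
    le_antisymm (hsum ▸ mul_nonpos_of_nonneg_of_nonpos hx2.le (by linarith))
      (Finset.sum_nonneg hnn)
  refine ⟨fun i hi hwi => ?_, ?_⟩
  · have := (Finset.sum_eq_zero_iff_of_nonneg hnn).mp h0 i hi
    have h1 : x ^ 2 - ν i * x = 0 :=
      (mul_eq_zero.mp this).resolve_left (Nat.cast_ne_zero.mpr hwi)
    exact mul_right_cancel₀ hx (by linarith [sq x])
  · have h1 := (mul_eq_zero.mp (hsum ▸ h0)).resolve_left hx2.ne'
    exact_mod_cast sub_eq_zero.mp h1

namespace IsPeirceFamily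

variable {A : ι → Module.End ℂ V} {C : κ → Module.End ℂ V}

/-- The eigenspaces of a combination of a Peirce family, in terms of weights. -/
theorem eigenspace_sum_smul (hA : IsPeirceFamily A) (s : Finset ι) (ν : ι → ℝ) (x : ℝ) :
    eigenspace (∑ i ∈ s, (ν i : ℂ) • A i) x =
      ⨆ (w : {w : ι → ℕ // ∑ i, w i ≤ 2}) (_ : ∑ i ∈ s, ν i * w.1 i = x),
        ⨅ i, eigenspace (A i) (w.1 i : ℂ) := by
  have := eigenspace_eq_iSup_of_iSup_eq_top (∑ i ∈ s, (ν i : ℂ) • A i) _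
    (fun w : {w : ι → ℕ // ∑ i, w i ≤ 2} => ((∑ i ∈ s, ν i * w.1 i : ℝ) : ℂ))
    (fun w v hv => ?_) hA.iSup_eq_top x
  · simpa only [Complex.ofReal_inj] using this
  · rw [mem_eigenspace_iff, LinearMap.sum_apply]
    push_cast
    rw [Finset.sum_smul]
    refine Finset.sum_congr rfl fun i _ => ?_
    rw [LinearMap.smul_apply, mem_eigenspace_iff.mp ((Submodule.mem_iInf _).mp hv i), smul_smul]

/-- The extreme eigenspace of a combination of a Peirce family is a Peirce 2-space. -/
theorem eigenspace_sum_smul_two_mul (hA : IsPeirceFamily A) {s : Finset ι} {ν : ι → ℝ}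
    (hν : Function.Injective ν) {m : ι} (hm : m ∈ s) (hm0 : ν m ≠ 0)
    (hle : ∀ i ∈ s, |ν i| ≤ |ν m|) :
    eigenspace (∑ i ∈ s, (ν i : ℂ) • A i) ((2 * ν m : ℝ) : ℂ) = eigenspace (A m) 2 := by
  classical
  have hsingle := hA.eigenspace_sum_smul {m} (fun _ => 1) 2
  simp only [Finset.sum_singleton, Complex.ofReal_one, one_smul, one_mul,
    Complex.ofReal_ofNat] at hsingle
  rw [hA.eigenspace_sum_smul, hsingle]
  refine iSup_congr fun w => iSup_congr_Prop ?_ fun _ => rfl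
  constructor
  · intro h
    obtain ⟨h1, h2⟩ := eq_of_sum_mul_eq_two_mul hm0 hle w.2 h
    rw [Finset.sum_eq_single_of_mem m hm fun i hi him => by
      by_contra hwi; exact him (hν (h1 i hi hwi))] at h2
    exact_mod_cast h2
  · intro h
    have hwm : w.1 m = 2 := by exact_mod_cast h
    have h0 : ∀ i, i ≠ m → w.1 i = 0 := fun i him => by
      have := Finset.sum_le_sum_of_subset (f := w.1) (Finset.subset_univ {i, m})
      rw [Finset.sum_pair him] at this
      have := w.2
      omega
    rw [Finset.sum_eq_single_of_mem m hm fun i _ him => by simp [h0 i him], hwm]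
    push_cast
    ring

/-- Members of Peirce families agree as soon as their eigenspaces for `0`, `1`, `2` do. -/
theorem apply_eq_apply (hA : IsPeirceFamily A) {i : ι} {f : Module.End ℂ V}
    (h : ∀ m : ℂ, m = 0 ∨ m = 1 ∨ m = 2 → eigenspace (A i) m = eigenspace f m) : A i = f := by
  suffices hle : (⊤ : Submodule ℂ V) ≤ LinearMap.eqLocus (A i) f from
    LinearMap.ext fun v => hle (Submodule.mem_top (x := v))
  rw [← hA.iSup_eq_top]
  refine iSup_le fun w v hv => ?_
  have hv' := (Submodule.mem_iInf _).mp hv i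
  have hwi : w.1 i ≤ 2 := (Finset.single_le_sum (fun _ _ => Nat.zero_le _)
    (Finset.mem_univ i)).trans w.2
  have hv'' := hv'
  rw [h _ (by interval_cases w.1 i <;> simp)] at hv''
  rw [LinearMap.mem_eqLocus, mem_eigenspace_iff.mp hv', mem_eigenspace_iff.mp hv'']

/-- If a coefficient on one side is extreme among all, it occurs on the other side, with the same
operator. -/
theorem exists_eq_of_sum_eq (hA : IsPeirceFamily A) (hC : IsPeirceFamily C)
    (hdet : ∀ i j, eigenspace (A i) 2 = eigenspace (C j) 2 → A i = C j)
    {ν : ι → ℝ} {μ : κ → ℝ} (hν : Function.Injective ν) (hμ : Function.Injective μ)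
    {s : Finset ι} {t : Finset κ}
    (h : ∑ i ∈ s, (ν i : ℂ) • A i = ∑ j ∈ t, (μ j : ℂ) • C j)
    {m : ι} (hm : m ∈ s) (hm0 : ν m ≠ 0) (hs : ∀ i ∈ s, |ν i| ≤ |ν m|)
    (ht : ∀ j ∈ t, |μ j| ≤ |ν m|) :
    ∃ j ∈ t, ν m = μ j ∧ A m = C j := by
  have hAm := hA.eigenspace_sum_smul_two_mul hν hm hm0 hs
  obtain ⟨j, hj, hjm⟩ : ∃ j ∈ t, μ j = ν m := by
    by_contra! hne
    refine hA.eigenspace_two_ne_bot m ?_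
    rw [← hAm, h, hC.eigenspace_sum_smul, eq_bot_iff]
    refine iSup₂_le fun w hw => ?_
    obtain ⟨h1, h2⟩ := eq_of_sum_mul_eq_two_mul hm0 ht w.2 hw
    have : ∑ j ∈ t, w.1 j = 0 := Finset.sum_eq_zero fun j hj => by
      by_contra hwj; exact hne j hj (h1 j hj hwj)
    omega
  refine ⟨j, hj, hjm.symm, hdet m j ?_⟩
  rw [← hAm, h, ← hjm]
  exact hC.eigenspace_sum_smul_two_mul hμ hj (hjm ▸ hm0) fun i hi => hjm ▸ ht i hi

/-- Equal combinations of two Peirce families with distinct nonzero real coefficients have the same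
terms. -/
theorem terms_eq_of_sum_eq (hA : IsPeirceFamily A) (hC : IsPeirceFamily C)
    (hdet : ∀ i j, eigenspace (A i) 2 = eigenspace (C j) 2 → A i = C j)
    {ν : ι → ℝ} {μ : κ → ℝ} (hν : Function.Injective ν) (hμ : Function.Injective μ)
    (hν0 : ∀ i, ν i ≠ 0) (hμ0 : ∀ j, μ j ≠ 0) (s : Finset ι) (t : Finset κ)
    (h : ∑ i ∈ s, (ν i : ℂ) • A i = ∑ j ∈ t, (μ j : ℂ) • C j) :
    (∀ i ∈ s, ∃ j ∈ t, ν i = μ j ∧ A i = C j) ∧ ∀ j ∈ t, ∃ i ∈ s, ν i = μ j ∧ A i = C j := by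
  classical
  induction hn : s.card generalizing s t with
  | zero =>
    obtain rfl := Finset.card_eq_zero.mp hn
    refine ⟨by simp, fun j hj => ?_⟩
    obtain ⟨m, hm, hmax⟩ := t.exists_max_image (fun j => |μ j|) ⟨j, hj⟩
    obtain ⟨i, hi, -⟩ := hC.exists_eq_of_sum_eq hA (fun i j h => (hdet j i h.symm).symm) hμ hν
      h.symm hm (hμ0 m) hmax (by simp)
    simp at hi
  | succ n ih =>
    obtain ⟨m, hm, j, hj, hmj, hAC⟩ : ∃ m ∈ s, ∃ j ∈ t, ν m = μ j ∧ A m = C j := by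
      obtain ⟨m, hm, hmax⟩ := s.exists_max_image (fun i => |ν i|)
        (Finset.card_pos.mp (by omega))
      by_cases hall : ∀ j ∈ t, |μ j| ≤ |ν m|
      · exact ⟨m, hm, hA.exists_eq_of_sum_eq hC hdet hν hμ h hm (hν0 m) hmax hall⟩
      · push Not at hall
        obtain ⟨j₀, hj₀, hlt⟩ := hall
        obtain ⟨j, hj, hjmax⟩ := t.exists_max_image (fun j => |μ j|) ⟨j₀, hj₀⟩
        obtain ⟨i, hi, h1, h2⟩ := hC.exists_eq_of_sum_eq hA
          (fun i j h => (hdet j i h.symm).symm) hμ hν h.symm hj (hμ0 j) hjmax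
          fun i hi => (hmax i hi).trans (hlt.le.trans (hjmax j₀ hj₀))
        exact ⟨i, hi, j, hj, h1.symm, h2.symm⟩
    have h' : ∑ i ∈ s.erase m, (ν i : ℂ) • A i = ∑ j ∈ t.erase j, (μ j : ℂ) • C j := by
      rw [← Finset.add_sum_erase s _ hm, ← Finset.add_sum_erase t _ hj, hmj, hAC] at h
      exact add_left_cancel h
    obtain ⟨ih1, ih2⟩ := ih _ _ h' (by rw [Finset.card_erase_of_mem hm, hn]; rfl)
    refine ⟨fun i hi => ?_, fun i hi => ?_⟩
    · rcases eq_or_ne i m with rfl | him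
      · exact ⟨j, hj, hmj, hAC⟩
      · obtain ⟨b, hb, hb'⟩ := ih1 i (Finset.mem_erase.mpr ⟨him, hi⟩)
        exact ⟨b, Finset.mem_of_mem_erase hb, hb'⟩
    · rcases eq_or_ne i j with rfl | hij
      · exact ⟨m, hm, hmj, hAC⟩
      · obtain ⟨b, hb, hb'⟩ := ih2 i (Finset.mem_erase.mpr ⟨hij, hi⟩)
        exact ⟨b, Finset.mem_of_mem_erase hb, hb'⟩

end IsPeirceFamily

end PeirceFamily

/-- Strictly monotone finite sequences with the same range are equal. -/
theorem Fin.exists_cast_eq_of_range_eq {k l : ℕ} {ν : Fin k → ℝ} {μ : Fin l → ℝ}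
    (hν : StrictMono ν) (hμ : StrictMono μ) (h : Set.range ν = Set.range μ) :
    ∃ h : k = l, ∀ i, ν i = μ (Fin.cast h i) := by
  have hkl : k = l := by
    have := Set.card_range_of_injective hν.injective
    have h2 := Set.card_range_of_injective hμ.injective
    simp only [← Nat.card_eq_fintype_card, Nat.card_fin] at this h2
    rw [← this, ← h2, h]
  subst hkl
  exact ⟨rfl, fun i => congrFun ((hν.range_inj hμ).mp h) i⟩

/-- The operators `D_{e, ē}` of a system of orthogonal nonzero tripotents with joint Peirce
decomposition form a Peirce family. -/
theorem isPeirceFamily_of_tripotents {V V' : Type*} [AddCommGroup V] [Module ℂ V]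
    [AddCommGroup V'] [Module ℂ V'] (J : JordanPairData V V') (bar : V → V')
    {k : ℕ} (e : Fin k → V)
    (htrip : ∀ i, J.Q (e i) (bar (e i)) = e i) (hne : ∀ i, e i ≠ 0)
    (hdec : (⨆ p : Fin (k + 1) × Fin (k + 1), jointPeirceSpace J bar e p.1 p.2) = ⊤) :
    IsPeirceFamily fun i => (J.D (e i) (bar (e i)) : Module.End ℂ V) where
  iSup_eq_top := by
    refine top_le_iff.mp (hdec ▸ iSup_le fun p => ?_)
    have hcount : ∀ q : Fin (k + 1), ∑ i : Fin k, (if Fin.succ i = q then 1 else 0) ≤ 1 := by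
      intro q
      cases q using Fin.cases with
      | zero => simp [Fin.succ_ne_zero]
      | succ q => simp
    refine le_iSup_of_le ⟨fun i => (if Fin.succ i = p.1 then 1 else 0) +
      (if Fin.succ i = p.2 then 1 else 0), ?_⟩ (le_of_eq ?_)
    · rw [Finset.sum_add_distrib]
      exact add_le_add (hcount p.1) (hcount p.2)
    · simp [jointPeirceSpace]
  eigenspace_two_ne_bot i := by
    refine (Submodule.ne_bot_iff _).mpr ⟨e i, ?_, hne i⟩
    rw [Module.End.mem_eigenspace_iff, J.D_eq, ← two_smul ℂ (e i), J.Q_smul, htrip]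
    module

/-- let `(e₁, …, e_k)` and `(c₁, …, c_ℓ)` be systems of pairwise orthogonal
nonzero tripotents, and `ν₁ < … < ν_k`, `μ₁ < … < μ_ℓ` nonzero real numbers.  Then
`Σ νᵢ D_{eᵢ, ēᵢ} = Σ μⱼ D_{cⱼ, c̄ⱼ}` iff `k = ℓ`, `νᵢ = μᵢ` and `eᵢ ≈ cᵢ` (same Peirce
decompositions) for all `i`.  The existence of the joint Peirce decompositions and the fact
that Peirce 2-spaces of tripotents determine the whole Peirce decomposition are assumed. -/
theorem orthogonal_tripotent_operator_equality {V V' : Type*} [AddCommGroup V] [Module ℂ V]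
    [AddCommGroup V'] [Module ℂ V'] (J : JordanPairData V V') (bar : V → V')
    {k l : ℕ} (e : Fin k → V) (c : Fin l → V)
    (htrip_e : ∀ i, J.Q (e i) (bar (e i)) = e i) (hne_e : ∀ i, e i ≠ 0)
    (horth_e : ∀ i j, i ≠ j → J.D (e i) (bar (e i)) (e j) = 0)
    (htrip_c : ∀ i, J.Q (c i) (bar (c i)) = c i) (hne_c : ∀ i, c i ≠ 0)
    (horth_c : ∀ i j, i ≠ j → J.D (c i) (bar (c i)) (c j) = 0)
    (ν : Fin k → ℝ) (μ : Fin l → ℝ)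
    (hν : StrictMono ν) (hν0 : ∀ i, ν i ≠ 0)
    (hμ : StrictMono μ) (hμ0 : ∀ j, μ j ≠ 0)
    (hdec_e : (⨆ p : Fin (k + 1) × Fin (k + 1), jointPeirceSpace J bar e p.1 p.2) = ⊤)
    (hdec_c : (⨆ p : Fin (l + 1) × Fin (l + 1), jointPeirceSpace J bar c p.1 p.2) = ⊤)
    (hdet : ∀ a b : V, J.Q a (bar a) = a → J.Q b (bar b) = b →
      peirceSpace J bar a 2 = peirceSpace J bar b 2 →
      ∀ m : ℂ, peirceSpace J bar a m = peirceSpace J bar b m) :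
    (∑ i, (ν i : ℂ) • (J.D (e i) (bar (e i)) : V →ₗ[ℂ] V)
        = ∑ j, (μ j : ℂ) • (J.D (c j) (bar (c j)) : V →ₗ[ℂ] V)) ↔
      ∃ h : k = l, ∀ i : Fin k,
        ν i = μ (Fin.cast h i) ∧
        ∀ m : ℂ, m = 0 ∨ m = 1 ∨ m = 2 →
          peirceSpace J bar (e i) m = peirceSpace J bar (c (Fin.cast h i)) m := by
  have hA := isPeirceFamily_of_tripotents J bar e htrip_e hne_e hdec_e
  have hC := isPeirceFamily_of_tripotents J bar c htrip_c hne_c hdec_c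
  constructor
  · intro heq
    obtain ⟨h1, h2⟩ := hA.terms_eq_of_sum_eq hC
      (fun i j h => hA.apply_eq_apply fun m _ => hdet _ _ (htrip_e i) (htrip_c j) h m)
      hν.injective hμ.injective hν0 hμ0 Finset.univ Finset.univ heq
    obtain ⟨hkl, hνμ⟩ := Fin.exists_cast_eq_of_range_eq hν hμ <| by
      refine Set.Subset.antisymm ?_ ?_
      · rintro _ ⟨i, rfl⟩
        obtain ⟨j, -, hj, -⟩ := h1 i (Finset.mem_univ i)
        exact ⟨j, hj.symm⟩
      · rintro _ ⟨j, rfl⟩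
        obtain ⟨i, -, hi, -⟩ := h2 j (Finset.mem_univ j)
        exact ⟨i, hi⟩
    refine ⟨hkl, fun i => ⟨hνμ i, fun m _ => ?_⟩⟩
    obtain ⟨j, -, hj, hAC⟩ := h1 i (Finset.mem_univ i)
    obtain rfl := hμ.injective ((hνμ i).symm.trans hj)
    exact congrArg (fun f : Module.End ℂ V => Module.End.eigenspace f m) hAC
  · rintro ⟨rfl, h⟩
    refine Finset.sum_congr rfl fun i _ => ?_
    obtain ⟨hi, hp⟩ := h i
    rw [hi]
    exact congrArg _ (hA.apply_eq_apply hp)
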